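/- Let Γ be a finite extensive-form game with perfect recall and suppose (β*, β̃*, μ*) satisfies the Nash characterization. Then for every i ∈ N and j ∈ M_i with S^i(I_i^j|β*) > 0, Σ_{a ∈ A(I_i^j)} β̃*^i_{I_i^j}(a) u^i(a, ϱ^i_{I_i^j}(β*^{-I_i^j}, β̃*), μ* | I_i^j) equals the maximum over all behavioral strategy profiles β̃ of Σ_{a ∈ A(I_i^j)} β̃^i_{I_i^j}(a) u^i(a, ϱ^i_{I_i^j}(β*^{-I_i^j}, β̃), μ* | I_i^j). -/

import Mathlib

open scoped Classical

noncomputable section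

/-- A finite extensive-form game.  Actions are labelled by natural numbers drawn from the
finite pool `actFinset`; a history is the list of actions taken so far; players are `Fin n`
and `P h = none` means that the chance player moves after `h`.  The information sets of
player `i` are `Info i j` for `j < m i`, and `infoIdx h` is the index of the information
set containing a nonterminal history `h` at which some player moves.  Payoffs `u i h` are
relevant on terminal histories. -/
structure EFG where
  n : ℕ
  actFinset : Finset ℕ
  H : Finset (List ℕ)
  P : List ℕ → Option (Fin n)
  fc : List ℕ → ℕ → ℝ
  m : Fin n → ℕ
  Info : Fin n → ℕ → Finset (List ℕ)
  infoIdx : List ℕ → ℕ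
  u : Fin n → List ℕ → ℝ
  empty_mem : ([] : List ℕ) ∈ H
  prefixClosed : ∀ h ∈ H, ∀ h' : List ℕ, h' <+: h → h' ∈ H
  act_mem : ∀ (h : List ℕ) (a : ℕ), h ++ [a] ∈ H → a ∈ actFinset
  fc_nonneg : ∀ h a, 0 ≤ fc h a
  fc_sum : ∀ h ∈ H, P h = none → (∃ a, h ++ [a] ∈ H) →
    ∑ a ∈ actFinset.filter (fun a => h ++ [a] ∈ H), fc h a = 1
  info_spec : ∀ (i : Fin n) (j : ℕ) (h : List ℕ), j < m i →
    (h ∈ Info i j ↔ h ∈ H ∧ P h = some i ∧ (∃ a, h ++ [a] ∈ H) ∧ infoIdx h = j)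
  infoIdx_lt : ∀ (i : Fin n), ∀ h ∈ H, P h = some i → (∃ a, h ++ [a] ∈ H) → infoIdx h < m i
  info_nonempty : ∀ (i : Fin n) (j : ℕ), j < m i → (Info i j).Nonempty
  info_actions : ∀ (i : Fin n) (j : ℕ), j < m i → ∀ h ∈ Info i j, ∀ h' ∈ Info i j,
    ∀ a : ℕ, (h ++ [a] ∈ H ↔ h' ++ [a] ∈ H)
  act_unique : ∀ (h h' : List ℕ) (a : ℕ), h ∈ H → h' ∈ H → h ++ [a] ∈ H → h' ++ [a] ∈ H →
    P h = P h' ∧ infoIdx h = infoIdx h'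

namespace EFG

/-- Behavioral strategy profiles (player, information-set index, action ↦ probability). -/
abbrev Profile (G : EFG) : Type := Fin G.n → ℕ → ℕ → ℝ

/-- Belief systems (player, information-set index, history ↦ probability). -/
abbrev Belief (G : EFG) : Type := Fin G.n → ℕ → List ℕ → ℝ

variable (G : EFG)

/-- The set `Z` of terminal histories. -/
def Zset : Finset (List ℕ) := G.H.filter fun h => ∀ a : ℕ, h ++ [a] ∉ G.H

/-- The set `A(h)` of actions available after a history. -/
def A (h : List ℕ) : Finset ℕ := G.actFinset.filter fun a => h ++ [a] ∈ G.H

/-- The common action set `A(I_i^j)` of an information set. -/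
def infoA (i : Fin G.n) (j : ℕ) : Finset ℕ := (G.Info i j).sup fun h => G.A h

/-- A behavioral strategy of player `i`: a probability distribution on `A(I_i^j)` for
each information set `I_i^j`. -/
def IsBehStrategy (i : Fin G.n) (b : ℕ → ℕ → ℝ) : Prop :=
  ∀ j < G.m i, (∀ a ∈ G.infoA i j, 0 ≤ b j a) ∧ ∑ a ∈ G.infoA i j, b j a = 1

/-- A behavioral strategy profile. -/
def IsBehProfile (β : G.Profile) : Prop := ∀ i : Fin G.n, G.IsBehStrategy i (β i)

/-- The probability of action `a` at history `h`: the chance distribution if the chance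
player moves, and the mover's behavioral strategy otherwise. -/
def moveProb (β : G.Profile) (h : List ℕ) (a : ℕ) : ℝ :=
  (G.P h).elim (G.fc h a) fun i => β i (G.infoIdx h) a

/-- Player `i`'s record `X_i` of the information sets he encounters along a history and the
actions he takes at them, accumulated starting from the prefix `pre`. -/
def recordFrom (i : Fin G.n) : List ℕ → List ℕ → List (ℕ × ℕ)
  | _, [] => []
  | pre, b :: rest =>
    (if G.P pre = some i then [(G.infoIdx pre, b)] else []) ++ recordFrom i (pre ++ [b]) rest

/-- Perfect recall. -/
def PerfectRecall : Prop :=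
  ∀ (i : Fin G.n) (j : ℕ), j < G.m i →
    ∀ h ∈ G.Info i j, ∀ h' ∈ G.Info i j, G.recordFrom i [] h = G.recordFrom i [] h'

/-- Product of the move probabilities along `rest`, continuing from the prefix `pre`. -/
def prodAlong (β : G.Profile) : List ℕ → List ℕ → ℝ
  | _, [] => 1
  | pre, b :: rest => G.moveProb β pre b * prodAlong β (pre ++ [b]) rest

/-- `ω(h|β)`: the probability that the moves along `h` are played under `β`. -/
def omega (β : G.Profile) (h : List ℕ) : ℝ := G.prodAlong β [] h

/-- `ω(I_i^j|β)`. -/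
def omegaInfo (i : Fin G.n) (j : ℕ) (β : G.Profile) : ℝ := ∑ h ∈ G.Info i j, G.omega β h

/-- Product of the move probabilities along `rest` from `pre`, disregarding player `i`'s
own moves. -/
def prodAlongNot (i : Fin G.n) (β : G.Profile) : List ℕ → List ℕ → ℝ
  | _, [] => 1
  | pre, b :: rest =>
    (if G.P pre = some i then 1 else G.moveProb β pre b) * prodAlongNot i β (pre ++ [b]) rest

/-- `S^i(h|β)`: probability of the moves along `h`, disregarding player `i`'s own moves. -/
def Sh (i : Fin G.n) (β : G.Profile) (h : List ℕ) : ℝ := G.prodAlongNot i β [] h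

/-- `S^i(I_i^j|β)`. -/
def SInfo (i : Fin G.n) (j : ℕ) (β : G.Profile) : ℝ := ∑ h ∈ G.Info i j, G.Sh i β h

/-- Product of the move probabilities along `rest` from `pre`, with the factor at prefixes
lying in `I_i^j` omitted. -/
def prodAlongSkip (i : Fin G.n) (j : ℕ) (β : G.Profile) : List ℕ → List ℕ → ℝ
  | _, [] => 1
  | pre, b :: rest =>
    (if pre ∈ G.Info i j then 1 else G.moveProb β pre b) * prodAlongSkip i j β (pre ++ [b]) rest

/-- `q ∈ M(a, I_i^j)`: `I_i^q` is a first information set of player `i` after action `a`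
(every history in `I_i^q` contains `a`, with no later action of `a` lying in any action set
of player `i`). -/
def FirstAfter (i : Fin G.n) (a : ℕ) (q : ℕ) : Prop :=
  q < G.m i ∧ ∀ h ∈ G.Info i q, ∃ l₁ l₂ : List ℕ,
    h = l₁ ++ a :: l₂ ∧ ∀ b ∈ l₂, ∀ p < G.m i, b ∉ G.infoA i p

/-- `q ∈ M(I_i^j) = ∪_{a ∈ A(I_i^j)} M(a, I_i^j)`. -/
def MInfo (i : Fin G.n) (j : ℕ) (q : ℕ) : Prop := ∃ a ∈ G.infoA i j, G.FirstAfter i a q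

/-- `q ∈ Λ(a, I_i^j)`: every history in `I_i^q` contains the action `a`. -/
def LambdaSet (i : Fin G.n) (a : ℕ) (q : ℕ) : Prop :=
  q < G.m i ∧ ∀ h ∈ G.Info i q, ∃ l₁ l₂ : List ℕ, h = l₁ ++ a :: l₂

/-- `ϱ^i_{I_i^j}(β, β̃)`: replace player `i`'s component of `β` by that of `β̃` at every
information set `I_i^q` such that some history in `I_i^q` contains an action of `A(I_i^j)`. -/
def rho (i : Fin G.n) (j : ℕ) (β βt : G.Profile) : G.Profile := fun p q =>
  if p = i ∧ ∃ h ∈ G.Info i q, ∃ b ∈ h, b ∈ G.infoA i j then βt i q else β p q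

/-- A belief system: a probability distribution on each information set. -/
def IsBelief (μ : G.Belief) : Prop :=
  ∀ (i : Fin G.n) (j : ℕ), j < G.m i →
    (∀ h ∈ G.Info i j, 0 ≤ μ i j h) ∧ ∑ h ∈ G.Info i j, μ i j h = 1

/-- A self-independent belief system for `β`:
`S^i(I_i^j|β) · μ^i_{I_i^j}(h) = S^i(h|β)`. -/
def SelfIndep (β : G.Profile) (μ : G.Belief) : Prop :=
  ∀ (i : Fin G.n) (j : ℕ), j < G.m i → ∀ h ∈ G.Info i j,
    G.SInfo i j β * μ i j h = G.Sh i β h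

/-- Auxiliary for `ν`: scan `rest` from `pre` for the subhistory lying in `I_i^j`, then
weight by the belief and multiply the move probabilities of the remaining moves (the move
taken at the subhistory itself being skipped). -/
def nuAux (i : Fin G.n) (j : ℕ) (β : G.Profile) (w : List ℕ → ℝ) : List ℕ → List ℕ → ℝ
  | _, [] => 0
  | pre, b :: rest =>
    if pre ∈ G.Info i j then w pre * G.prodAlong β (pre ++ [b]) rest
    else nuAux i j β w (pre ++ [b]) rest

/-- `ν^i_{I_i^j}(h | a, β^{-I_i^j}, μ)` (it does not involve the component of `β` at
`I_i^j`). -/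
def nu (i : Fin G.n) (j : ℕ) (β : G.Profile) (μ : G.Belief) (h : List ℕ) : ℝ :=
  G.nuAux i j β (μ i j) [] h

/-- `u^i((a, β^{-I_i^j}) ∧ I_i^j)`. -/
def uWedgeAct (i : Fin G.n) (j : ℕ) (a : ℕ) (β : G.Profile) : ℝ :=
  ∑ h ∈ G.Zset.filter (fun h => a ∈ h), G.u i h * G.prodAlongSkip i j β [] h

/-- `u^i(β ∧ I_i^j)`. -/
def uWedge (i : Fin G.n) (j : ℕ) (β : G.Profile) : ℝ :=
  ∑ h ∈ G.Zset.filter (fun h => ∃ b ∈ h, b ∈ G.infoA i j), G.u i h * G.omega β h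

/-- The conditional expected payoff `u^i(a, β^{-I_i^j}, μ | I_i^j)`. -/
def uCond (i : Fin G.n) (j : ℕ) (a : ℕ) (β : G.Profile) (μ : G.Belief) : ℝ :=
  ∑ h ∈ G.Zset.filter (fun h => a ∈ h), G.u i h * G.nu i j β μ h

/-- The expected payoff `u^i(β)`. -/
def uExp (i : Fin G.n) (β : G.Profile) : ℝ := ∑ h ∈ G.Zset, G.u i h * G.omega β h

/-- The profile obtained from `β` by replacing all of player `i`'s components by `b`. -/
def replace (β : G.Profile) (i : Fin G.n) (b : ℕ → ℕ → ℝ) : G.Profile :=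
  fun p => if p = i then b else β p

/-- `β` is a Nash equilibrium in behavioral strategies. -/
def IsNash (β : G.Profile) : Prop :=
  G.IsBehProfile β ∧ ∀ (i : Fin G.n) (b : ℕ → ℕ → ℝ), G.IsBehStrategy i b →
    G.uExp i (G.replace β i b) ≤ G.uExp i β

/-- `(β, β̃, μ)` satisfies the Nash characterization (Definition 2 of the paper). -/
def NashChar (β βt : G.Profile) (μ : G.Belief) : Prop :=
  (∀ (i : Fin G.n) (j : ℕ), j < G.m i → ∀ a' ∈ G.infoA i j, ∀ a'' ∈ G.infoA i j,
    G.uWedgeAct i j a' (G.rho i j β βt) < G.uWedgeAct i j a'' (G.rho i j β βt) →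
    β i j a' = 0) ∧
  (∀ (i : Fin G.n) (j : ℕ), j < G.m i → ∀ a' ∈ G.infoA i j, ∀ a'' ∈ G.infoA i j,
    G.uCond i j a' (G.rho i j β βt) μ < G.uCond i j a'' (G.rho i j β βt) μ →
    βt i j a' = 0) ∧
  G.IsBelief μ ∧ G.SelfIndep β μ

/-- `r` is the root of a subgame: every information set lies entirely inside or entirely
outside the set of histories extending `r`. -/
def IsSubgameRoot (r : List ℕ) : Prop :=
  r ∈ G.H ∧ ∀ (i : Fin G.n) (j : ℕ), j < G.m i →
    (∀ h ∈ G.Info i j, r <+: h) ∨ ∀ h ∈ G.Info i j, ¬ r <+: h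

/-- The depth `g` of the smallest subgame containing `A(I_i^j)` (the length of the longest
subgame root preceding every history of `I_i^j`). -/
def sgDepthInfo (i : Fin G.n) (j : ℕ) : ℕ :=
  (G.H.filter fun r => G.IsSubgameRoot r ∧ ∀ h ∈ G.Info i j, r <+: h).sup List.length

/-- The depth `q(h)` of the smallest subgame containing the last action of `h`. -/
def sgDepthHist (h : List ℕ) : ℕ :=
  (G.H.filter fun r => G.IsSubgameRoot r ∧ r <+: h.dropLast).sup List.length

/-- `C^i_{I_i^j}(h|β)`: product of move probabilities along `h` within the smallest subgame
containing `A(I_i^j)`. -/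
def Ch (i : Fin G.n) (j : ℕ) (β : G.Profile) (h : List ℕ) : ℝ :=
  G.prodAlong β (h.take (G.sgDepthInfo i j)) (h.drop (G.sgDepthInfo i j))

/-- `C^i_{I_i^j}(I_i^j|β)`. -/
def CInfo (i : Fin G.n) (j : ℕ) (β : G.Profile) : ℝ := ∑ h ∈ G.Info i j, G.Ch i j β h

/-- `u^i((a, β^{-I_i^j}) ⋄ I_i^j)`. -/
def uDiamondAct (i : Fin G.n) (j : ℕ) (a : ℕ) (β : G.Profile) : ℝ :=
  ∑ h ∈ G.Zset.filter (fun h => a ∈ h), G.u i h *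
    G.prodAlongSkip i j β (h.take (G.sgDepthInfo i j)) (h.drop (G.sgDepthInfo i j))

/-- `Y^i(h|β)`: like `S^i(h|β)` but within the smallest subgame containing the last action
of `h`. -/
def Yh (i : Fin G.n) (β : G.Profile) (h : List ℕ) : ℝ :=
  G.prodAlongNot i β (h.take (G.sgDepthHist h)) (h.drop (G.sgDepthHist h))

/-- `Y^i(I_i^j|β)`. -/
def YInfo (i : Fin G.n) (j : ℕ) (β : G.Profile) : ℝ := ∑ h ∈ G.Info i j, G.Yh i β h

/-- The belief condition `Y^i(I_i^j|β) · μ^i_{I_i^j}(h) = Y^i(h|β)`. -/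
def YConsistent (β : G.Profile) (μ : G.Belief) : Prop :=
  ∀ (i : Fin G.n) (j : ℕ), j < G.m i → ∀ h ∈ G.Info i j,
    G.YInfo i j β * μ i j h = G.Yh i β h

/-- The expected payoff of player `i` in the subgame rooted at `r` (payoffs of terminal
histories extending `r`, weighted by the move probabilities within the subgame). -/
def uExpFrom (i : Fin G.n) (β : G.Profile) (r : List ℕ) : ℝ :=
  ∑ h ∈ G.Zset.filter (fun h => r <+: h), G.u i h * G.prodAlong β r (h.drop r.length)

/-- `β` is a subgame perfect equilibrium in behavioral strategies: its restriction to every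
subgame is a Nash equilibrium in behavioral strategies of that subgame. -/
def IsSubgamePerfect (β : G.Profile) : Prop :=
  G.IsBehProfile β ∧ ∀ r : List ℕ, G.IsSubgameRoot r →
    ∀ (i : Fin G.n) (b : ℕ → ℕ → ℝ), G.IsBehStrategy i b →
      G.uExpFrom i (G.replace β i b) r ≤ G.uExpFrom i β r

/-- `(β, β̃, μ)` satisfies the subgame perfect characterization (Definition 6 of the
paper). -/
def SubgameChar (β βt : G.Profile) (μ : G.Belief) : Prop :=
  (∀ (i : Fin G.n) (j : ℕ), j < G.m i → ∀ a' ∈ G.infoA i j, ∀ a'' ∈ G.infoA i j,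
    G.uDiamondAct i j a' (G.rho i j β βt) < G.uDiamondAct i j a'' (G.rho i j β βt) →
    β i j a' = 0) ∧
  (∀ (i : Fin G.n) (j : ℕ), j < G.m i → ∀ a' ∈ G.infoA i j, ∀ a'' ∈ G.infoA i j,
    G.uCond i j a' (G.rho i j β βt) μ < G.uCond i j a'' (G.rho i j β βt) μ →
    βt i j a' = 0) ∧
  G.IsBelief μ ∧ G.YConsistent β μ

/-- `(β, μ)` is a semi-sequential equilibrium. -/
def SemiSeqEq (β : G.Profile) (μ : G.Belief) : Prop :=
  G.IsBehProfile β ∧ G.IsBelief μ ∧ G.SelfIndep β μ ∧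
  ∀ (i : Fin G.n) (j : ℕ), j < G.m i → ∀ a' ∈ G.infoA i j, ∀ a'' ∈ G.infoA i j,
    G.uCond i j a' β μ < G.uCond i j a'' β μ → β i j a' = 0

/-- `(β, μ)` is a subgame perfect semi-sequential equilibrium. -/
def SubgameSemiSeqEq (β : G.Profile) (μ : G.Belief) : Prop :=
  G.IsBehProfile β ∧ G.IsBelief μ ∧ G.YConsistent β μ ∧
  ∀ (i : Fin G.n) (j : ℕ), j < G.m i → ∀ a' ∈ G.infoA i j, ∀ a'' ∈ G.infoA i j,
    G.uCond i j a' β μ < G.uCond i j a'' β μ → β i j a' = 0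

/-- `d(I_i^j)`: the number of information sets of player `i` containing a prefix of some
history of `I_i^j` (counting `I_i^j` itself). -/
def dInfo (i : Fin G.n) (j : ℕ) : ℕ :=
  ((Finset.range (G.m i)).filter
    (fun q => ∃ h ∈ G.Info i j, ∃ p : List ℕ, p <+: h ∧ p ∈ G.Info i q)).card

end EFG

/-!
Fix player `i` and a rival `b`, and let `σ`, `τ` be `β` with `i`'s strategy replaced by `βt i`
and by `b`. Unrolling the game tree writes the difference of the two continuation payoffs at a
history `h` as the expectation, under play of `τ` from `h`, of the gains from one-shot deviations
to `σ` at the later histories. Weight this by `S^i(h|β)` and sum over `h ∈ I_i^j`: the opponents'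
and chance's factors recombine to `S^i(x|β)`, and what is left over at `x` is the product of `b`'s
probabilities for the own actions between `I_i^j` and `x`. It can be read off player `i`'s record
of `x`, so by perfect recall it is constant on every `I_i^q`. Hence the difference is a nonnegative
combination, over `q`, of `Σ_{x ∈ I_i^q} S^i(x|β) · gain(x)`, and by self-independence this sum is
`S^i(I_i^q|β)` times what `b` loses against `βt` at `I_i^q` in conditional payoff when play
continues with `βt`, which optimality of `βt` makes nonnegative.
-/

theorem sum_mul_le_sum_mul_of_support_argmax {ι R : Type*} [Semiring R] [LinearOrder R]
    [IsStrictOrderedRing R] {s : Finset ι} {p q U : ι → R} (hp : ∑ a ∈ s, p a = 1)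
    (hq : ∑ a ∈ s, q a = 1) (hq0 : ∀ a ∈ s, 0 ≤ q a)
    (hpU : ∀ a ∈ s, ∀ b ∈ s, U a < U b → p a = 0) :
    ∑ a ∈ s, q a * U a ≤ ∑ a ∈ s, p a * U a := by
  have hs : s.Nonempty := Finset.nonempty_of_sum_ne_zero (hp.trans_ne one_ne_zero)
  obtain ⟨c, hc, hmax⟩ := s.exists_max_image U hs
  have hpc : ∀ a ∈ s, p a * U a = p a * U c := fun a ha => by
    rcases (hmax a ha).eq_or_lt with h | h
    · rw [h]
    · rw [hpU a ha c hc h, zero_mul, zero_mul]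
  calc ∑ a ∈ s, q a * U a
      ≤ ∑ a ∈ s, q a * U c :=
        Finset.sum_le_sum fun a ha => mul_le_mul_of_nonneg_left (hmax a ha) (hq0 a ha)
    _ = ∑ a ∈ s, p a * U c := by rw [← Finset.sum_mul, ← Finset.sum_mul, hp, hq]
    _ = ∑ a ∈ s, p a * U a := (Finset.sum_congr rfl hpc).symm

namespace EFG

variable {G : EFG} {i : Fin G.n} {j q : ℕ} {β βt γ : G.Profile} {μ : G.Belief} {b : ℕ → ℕ → ℝ}

/-! ### Histories and information sets -/

theorem mem_H_of_append {h r : List ℕ} (hr : h ++ r ∈ G.H) : h ∈ G.H :=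
  G.prefixClosed _ hr _ (List.prefix_append h r)

theorem mem_A {h : List ℕ} {a : ℕ} : a ∈ G.A h ↔ h ++ [a] ∈ G.H := by
  rw [A, Finset.mem_filter]
  exact and_iff_right_of_imp (G.act_mem h a)

theorem infoA_eq_A (hj : j < G.m i) {h : List ℕ} (hh : h ∈ G.Info i j) :
    G.infoA i j = G.A h := by
  ext a
  rw [infoA, Finset.mem_sup]
  constructor
  · rintro ⟨h', hh', ha⟩
    exact mem_A.2 ((G.info_actions i j hj h hh h' hh' a).2 (mem_A.1 ha))
  · exact fun ha => ⟨h, hh, ha⟩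

theorem mem_H_of_mem_Info (hj : j < G.m i) {h : List ℕ} (hh : h ∈ G.Info i j) : h ∈ G.H :=
  ((G.info_spec i j h hj).1 hh).1

theorem P_of_mem_Info (hj : j < G.m i) {h : List ℕ} (hh : h ∈ G.Info i j) : G.P h = some i :=
  ((G.info_spec i j h hj).1 hh).2.1

theorem infoIdx_of_mem_Info (hj : j < G.m i) {h : List ℕ} (hh : h ∈ G.Info i j) :
    G.infoIdx h = j :=
  ((G.info_spec i j h hj).1 hh).2.2.2

theorem notMem_Zset_of_mem_Info (hj : j < G.m i) {h : List ℕ} (hh : h ∈ G.Info i j) :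
    h ∉ G.Zset := fun hz => by
  obtain ⟨-, -, ⟨a, ha⟩, -⟩ := (G.info_spec i j h hj).1 hh
  exact (Finset.mem_filter.1 hz).2 a ha

theorem infoIdx_lt_of_snoc {h : List ℕ} {a : ℕ} (ha : h ++ [a] ∈ G.H) (hP : G.P h = some i) :
    G.infoIdx h < G.m i :=
  G.infoIdx_lt i h (mem_H_of_append ha) hP ⟨a, ha⟩

theorem mem_Info_infoIdx {h : List ℕ} {a : ℕ} (ha : h ++ [a] ∈ G.H) (hP : G.P h = some i) :
    h ∈ G.Info i (G.infoIdx h) :=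
  (G.info_spec i _ h (infoIdx_lt_of_snoc ha hP)).2 ⟨mem_H_of_append ha, hP, ⟨a, ha⟩, rfl⟩

theorem mem_Info_of_mem_infoA (hj : j < G.m i) {h : List ℕ} {a : ℕ} (ha : a ∈ G.infoA i j)
    (hh : h ++ [a] ∈ G.H) : h ∈ G.Info i j := by
  obtain ⟨h₀, hh₀⟩ := G.info_nonempty i j hj
  rw [infoA_eq_A hj hh₀, mem_A] at ha
  obtain ⟨hP, hidx⟩ := G.act_unique h h₀ a (mem_H_of_append hh) (mem_H_of_append ha) hh ha
  exact (G.info_spec i j h hj).2 ⟨mem_H_of_append hh, hP.trans (P_of_mem_Info hj hh₀), ⟨a, hh⟩,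
    hidx.trans (infoIdx_of_mem_Info hj hh₀)⟩

theorem sum_H_eq_sum_Info {f : List ℕ → ℝ}
    (hf : ∀ x ∈ G.H, (∀ q < G.m i, x ∉ G.Info i q) → f x = 0) :
    ∑ x ∈ G.H, f x = ∑ q ∈ Finset.range (G.m i), ∑ x ∈ G.Info i q, f x := by
  rw [← Finset.sum_biUnion]
  · refine (Finset.sum_subset ?_ fun x hx hxI => hf x hx ?_).symm
    · exact Finset.biUnion_subset.2 fun q hq x hx =>
        mem_H_of_mem_Info (Finset.mem_range.1 hq) hx
    · simpa using hxI
  · intro q hq q' hq' hne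
    refine Finset.disjoint_left.2 fun x hx hx' => hne ?_
    rw [← infoIdx_of_mem_Info (Finset.mem_range.1 hq) hx,
      infoIdx_of_mem_Info (Finset.mem_range.1 hq') hx']

theorem backward_induction {p : List ℕ → Prop}
    (step : ∀ h ∈ G.H, (∀ a ∈ G.A h, p (h ++ [a])) → p h) : ∀ h ∈ G.H, p h := by
  have key : ∀ k, ∀ h ∈ G.H, G.H.sup List.length < h.length + k → p h := by
    intro k
    induction k with
    | zero => exact fun h hh hk => absurd (Finset.le_sup (f := List.length) hh) (not_le.2 hk)
    | succ k ih =>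
      refine fun h hh hk => step h hh fun a ha => ih _ (mem_A.1 ha) ?_
      rw [List.length_append, List.length_singleton]
      omega
  exact fun h hh => key (G.H.sup List.length + 1) h hh (by omega)

theorem sum_filter_prefix_eq_add {T : Finset (List ℕ)} (hT : T ⊆ G.H) (F : List ℕ → ℝ)
    (h : List ℕ) :
    ∑ x ∈ T with h <+: x, F x =
      (if h ∈ T then F h else 0) + ∑ a ∈ G.A h, ∑ x ∈ T with h ++ [a] <+: x, F x := by
  have hsplit : {x ∈ T | h <+: x} =
      {x ∈ T | x = h} ∪ (G.A h).biUnion fun a => {x ∈ T | h ++ [a] <+: x} := by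
    ext x
    simp only [Finset.mem_filter, Finset.mem_union, Finset.mem_biUnion]
    constructor
    · rintro ⟨hx, r, rfl⟩
      cases r with
      | nil => exact .inl ⟨hx, List.append_nil h⟩
      | cons a r =>
        have hp : h ++ [a] <+: h ++ a :: r := ⟨r, by simp⟩
        exact .inr ⟨a, mem_A.2 (G.prefixClosed _ (hT hx) _ hp), hx, hp⟩
    · rintro (⟨hx, rfl⟩ | ⟨a, -, hx, hp⟩)
      · exact ⟨hx, List.prefix_rfl⟩
      · exact ⟨hx, (List.prefix_append _ _).trans hp⟩
  rw [hsplit, Finset.sum_union, Finset.sum_biUnion, Finset.sum_filter, Finset.sum_ite_eq']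
  · intro a _ a' _ hne
    refine Finset.disjoint_left.2 fun x hx hx' => hne ?_
    obtain ⟨r, rfl⟩ := (Finset.mem_filter.1 hx).2
    have haa' : a' = a := by simpa using (Finset.mem_filter.1 hx').2
    exact haa'.symm
  · simp only [Finset.disjoint_left, Finset.mem_filter, Finset.mem_biUnion, not_exists, not_and]
    rintro x ⟨-, rfl⟩ a - - hp
    simpa using hp.length_le

/-! ### Move probabilities -/

theorem moveProb_of_mem_Info (hj : j < G.m i) {h : List ℕ} (hh : h ∈ G.Info i j) (a : ℕ) :
    G.moveProb β h a = β i j a := by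
  simp [moveProb, P_of_mem_Info hj hh, infoIdx_of_mem_Info hj hh]

theorem moveProb_replace_self {h : List ℕ} (hP : G.P h = some i) (a : ℕ) :
    G.moveProb (G.replace β i b) h a = b (G.infoIdx h) a := by
  simp [moveProb, replace, hP]

theorem moveProb_replace_of_ne {h : List ℕ} (hP : G.P h ≠ some i) (a : ℕ) :
    G.moveProb (G.replace β i b) h a = G.moveProb β h a := by
  cases hp : G.P h with
  | none => simp [moveProb, hp]
  | some p =>
    have hpi : p ≠ i := fun e => hP (e ▸ hp)
    simp [moveProb, replace, hp, hpi]

theorem moveProb_rho_of_mem {h : List ℕ} {a c : ℕ} (ha : a ∈ G.infoA i j) (hah : a ∈ h)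
    (hc : h ++ [c] ∈ G.H) :
    G.moveProb (G.rho i j β βt) h c = G.moveProb (G.replace β i (βt i)) h c := by
  by_cases hP : G.P h = some i
  · have hrepl : ∃ h' ∈ G.Info i (G.infoIdx h), ∃ d ∈ h', d ∈ G.infoA i j :=
      ⟨h, mem_Info_infoIdx hc hP, a, hah, ha⟩
    simp [moveProb, hP, rho, replace, hrepl]
  · rw [moveProb_replace_of_ne hP]
    cases hp : G.P h with
    | none => simp [moveProb, hp]
    | some p =>
      have hpi : p ≠ i := fun e => hP (e ▸ hp)
      simp [moveProb, hp, rho, hpi]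

theorem prodAlong_rho_of_mem {a : ℕ} (ha : a ∈ G.infoA i j) {pre l : List ℕ} (hpre : a ∈ pre)
    (hl : pre ++ l ∈ G.H) :
    G.prodAlong (G.rho i j β βt) pre l = G.prodAlong (G.replace β i (βt i)) pre l := by
  induction l generalizing pre with
  | nil => rfl
  | cons c l ih =>
    rw [List.append_cons] at hl
    rw [prodAlong, prodAlong, moveProb_rho_of_mem ha hpre (mem_H_of_append hl),
      ih (List.mem_append_left _ hpre) hl]

theorem moveProb_nonneg (hβ : G.IsBehProfile β) {h : List ℕ} {a : ℕ} (ha : h ++ [a] ∈ G.H) :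
    0 ≤ G.moveProb β h a := by
  cases hP : G.P h with
  | none => simpa [moveProb, hP] using G.fc_nonneg h a
  | some p =>
    have hlt := infoIdx_lt_of_snoc ha hP
    have hh := mem_Info_infoIdx ha hP
    rw [moveProb_of_mem_Info hlt hh]
    exact (hβ p _ hlt).1 a (infoA_eq_A hlt hh ▸ mem_A.2 ha)

theorem prodAlongNot_nonneg (hβ : G.IsBehProfile β) {pre l : List ℕ} (hl : pre ++ l ∈ G.H) :
    0 ≤ G.prodAlongNot i β pre l := by
  induction l generalizing pre with
  | nil => exact zero_le_one
  | cons a l ih =>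
    rw [List.append_cons] at hl
    refine mul_nonneg ?_ (ih hl)
    split_ifs
    · exact zero_le_one
    · exact moveProb_nonneg hβ (mem_H_of_append hl)

theorem SInfo_nonneg (hβ : G.IsBehProfile β) (hj : j < G.m i) : 0 ≤ G.SInfo i j β :=
  Finset.sum_nonneg fun _ hh => prodAlongNot_nonneg hβ (mem_H_of_mem_Info hj hh)

theorem prodAlongNot_append (pre l r : List ℕ) :
    G.prodAlongNot i β pre (l ++ r) =
      G.prodAlongNot i β pre l * G.prodAlongNot i β (pre ++ l) r := by
  induction l generalizing pre with
  | nil => simp [prodAlongNot]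
  | cons a l ih => simp [prodAlongNot, ih, mul_assoc]

/-! ### Records and perfect recall -/

theorem recordFrom_append (pre l r : List ℕ) :
    G.recordFrom i pre (l ++ r) = G.recordFrom i pre l ++ G.recordFrom i (pre ++ l) r := by
  induction l generalizing pre with
  | nil => simp [recordFrom]
  | cons a l ih => simp [recordFrom, ih]

theorem mem_recordFrom {pre l : List ℕ} {a : ℕ} :
    (q, a) ∈ G.recordFrom i pre l ↔
      ∃ l₁ l₂, l = l₁ ++ a :: l₂ ∧ G.P (pre ++ l₁) = some i ∧ G.infoIdx (pre ++ l₁) = q := by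
  induction l generalizing pre with
  | nil => simp [recordFrom]
  | cons c l ih =>
    rw [recordFrom, List.mem_append, ih]
    constructor
    · rintro (h | ⟨l₁, l₂, rfl, hP, hq⟩)
      · split_ifs at h with hP
        · obtain ⟨rfl, rfl⟩ := Prod.mk.inj (List.mem_singleton.1 h)
          exact ⟨[], l, by simp [hP]⟩
        · simp at h
      · exact ⟨c :: l₁, l₂, by simp_all⟩
    · rintro ⟨_ | ⟨d, l₁⟩, l₂, hl, hP, hq⟩
      · obtain ⟨rfl, rfl⟩ := List.cons.inj hl
        rw [List.append_nil] at hP hq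
        exact .inl (by simp [hP, hq])
      · obtain ⟨rfl, rfl⟩ := List.cons.inj hl
        exact .inr ⟨l₁, l₂, rfl, by simpa using ⟨hP, hq⟩⟩

theorem eq_of_prefix_of_mem_Info (hPR : G.PerfectRecall) (hj : j < G.m i) {h h' : List ℕ}
    (hh : h ∈ G.Info i j) (hh' : h' ∈ G.Info i j) (hp : h <+: h') : h = h' := by
  obtain ⟨_ | ⟨a, r⟩, rfl⟩ := hp
  · rw [List.append_nil]
  · have hlen := congrArg List.length (hPR i j hj _ hh _ hh')
    simp [recordFrom_append, recordFrom, P_of_mem_Info hj hh] at hlen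

theorem eq_of_prefix_of_prefix (hPR : G.PerfectRecall) (hj : j < G.m i) {h h' x : List ℕ}
    (hh : h ∈ G.Info i j) (hh' : h' ∈ G.Info i j) (hx : h <+: x) (hx' : h' <+: x) : h = h' :=
  (List.prefix_or_prefix_of_prefix hx hx').elim (eq_of_prefix_of_mem_Info hPR hj hh hh')
    fun hp => (eq_of_prefix_of_mem_Info hPR hj hh' hh hp).symm

theorem exists_prefix_mem_Info (hPR : G.PerfectRecall) (hj : j < G.m i) (hq : q < G.m i)
    {x y : List ℕ} (hx : x ∈ G.Info i q) (hy : y ∈ G.Info i q)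
    (h : ∃ h ∈ G.Info i j, h <+: x) : ∃ h ∈ G.Info i j, h <+: y := by
  obtain ⟨h, hh, _ | ⟨a, r⟩, rfl⟩ := h
  · rw [List.append_nil] at hx
    have hjq : j = q := (infoIdx_of_mem_Info hj hh).symm.trans (infoIdx_of_mem_Info hq hx)
    exact ⟨y, hjq ▸ hy, List.prefix_rfl⟩
  · have hrec : (j, a) ∈ G.recordFrom i [] y := by
      rw [← hPR i q hq _ hx _ hy, mem_recordFrom]
      exact ⟨h, r, rfl, P_of_mem_Info hj hh, infoIdx_of_mem_Info hj hh⟩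
    obtain ⟨l₁, l₂, rfl, hP, rfl⟩ := mem_recordFrom.1 hrec
    have hl : l₁ ++ [a] ∈ G.H := by
      have := mem_H_of_mem_Info hq hy
      rw [List.append_cons] at this
      exact mem_H_of_append this
    exact ⟨l₁, mem_Info_infoIdx hl hP, List.prefix_append _ _⟩

/-- The probability that a player following the strategy `b` takes all the actions listed in
the record `L`. -/
def recordProb (b : ℕ → ℕ → ℝ) (L : List (ℕ × ℕ)) : ℝ := (L.map fun p => b p.1 p.2).prod

theorem recordProb_nonneg (hb : G.IsBehStrategy i b) {pre l : List ℕ} (hl : pre ++ l ∈ G.H) :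
    0 ≤ recordProb b (G.recordFrom i pre l) := by
  refine List.prod_nonneg fun t ht => ?_
  obtain ⟨⟨q, a⟩, hmem, rfl⟩ := List.mem_map.1 ht
  obtain ⟨l₁, l₂, rfl, hP, rfl⟩ := mem_recordFrom.1 hmem
  rw [← List.append_assoc, List.append_cons] at hl
  have ha := mem_H_of_append hl
  have hlt := infoIdx_lt_of_snoc ha hP
  exact (hb _ hlt).1 a (infoA_eq_A hlt (mem_Info_infoIdx ha hP) ▸ mem_A.2 ha)

theorem prodAlong_replace (pre l : List ℕ) :
    G.prodAlong (G.replace β i b) pre l =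
      G.prodAlongNot i β pre l * recordProb b (G.recordFrom i pre l) := by
  induction l generalizing pre with
  | nil => simp [prodAlong, prodAlongNot, recordFrom, recordProb]
  | cons a l ih =>
    rw [prodAlong, prodAlongNot, recordFrom, ih]
    by_cases hP : G.P pre = some i
    · simp [hP, moveProb_replace_self hP, recordProb, mul_left_comm]
    · simp [hP, moveProb_replace_of_ne hP, mul_assoc]

theorem Sh_mul_prodAlong_replace (h r : List ℕ) :
    G.Sh i β h * G.prodAlong (G.replace β i b) h r =
      G.Sh i β (h ++ r) * recordProb b (G.recordFrom i h r) := by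
  rw [prodAlong_replace, ← mul_assoc, Sh, Sh, prodAlongNot_append, List.nil_append]

/-- The probability that player `i`, following `b`, takes all his own actions on the way from
`I_i^j` to the history `x`; it is `0` if `x` does not pass through `I_i^j`. Under perfect recall
the sum has at most one term. -/
def reachWeight (G : EFG) (i : Fin G.n) (j : ℕ) (b : ℕ → ℕ → ℝ) (x : List ℕ) : ℝ :=
  ∑ h ∈ G.Info i j with h <+: x, recordProb b (G.recordFrom i h (x.drop h.length))

theorem reachWeight_nonneg (hb : G.IsBehStrategy i b) {x : List ℕ} (hx : x ∈ G.H) :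
    0 ≤ G.reachWeight i j b x := by
  refine Finset.sum_nonneg fun h hh => ?_
  obtain ⟨r, rfl⟩ := (Finset.mem_filter.1 hh).2
  rw [List.drop_left]
  exact recordProb_nonneg hb hx

theorem reachWeight_of_prefix (hPR : G.PerfectRecall) (hj : j < G.m i) {h x : List ℕ}
    (hh : h ∈ G.Info i j) (hx : h <+: x) :
    G.reachWeight i j b x =
      recordProb b ((G.recordFrom i [] x).drop (G.recordFrom i [] h).length) := by
  have hsingle : {h' ∈ G.Info i j | h' <+: x} = {h} := by
    ext h'
    rw [Finset.mem_filter, Finset.mem_singleton]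
    exact ⟨fun hh' => eq_of_prefix_of_prefix hPR hj hh'.1 hh hh'.2 hx, fun e => e ▸ ⟨hh, hx⟩⟩
  obtain ⟨r, rfl⟩ := hx
  rw [reachWeight, hsingle, Finset.sum_singleton, recordFrom_append, List.drop_left,
    List.drop_left, List.nil_append]

theorem reachWeight_eq_of_mem_Info (hPR : G.PerfectRecall) (hj : j < G.m i) (hq : q < G.m i)
    {x y : List ℕ} (hx : x ∈ G.Info i q) (hy : y ∈ G.Info i q) :
    G.reachWeight i j b x = G.reachWeight i j b y := by
  by_cases hpass : ∃ h ∈ G.Info i j, h <+: x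
  · obtain ⟨h', hh', hy'⟩ := exists_prefix_mem_Info hPR hj hq hx hy hpass
    obtain ⟨h, hh, hx'⟩ := hpass
    rw [reachWeight_of_prefix hPR hj hh hx', reachWeight_of_prefix hPR hj hh' hy',
      hPR i q hq x hx y hy, hPR i j hj h hh h' hh']
  · have hpass' : ¬∃ h ∈ G.Info i j, h <+: y :=
      fun h => hpass (exists_prefix_mem_Info hPR hj hq hy hx h)
    push Not at hpass hpass'
    rw [reachWeight, reachWeight, Finset.filter_false_of_mem hpass,
      Finset.filter_false_of_mem hpass', Finset.sum_empty, Finset.sum_empty]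

/-! ### Continuation payoffs -/

theorem sum_prefix_mul_prodAlong_snoc (T : Finset (List ℕ)) (f : List ℕ → ℝ) (h : List ℕ)
    (a : ℕ) :
    ∑ x ∈ T with h ++ [a] <+: x, f x * G.prodAlong γ h (x.drop h.length) =
      G.moveProb γ h a *
        ∑ x ∈ T with h ++ [a] <+: x, f x * G.prodAlong γ (h ++ [a]) (x.drop (h ++ [a]).length) := by
  rw [Finset.mul_sum]
  refine Finset.sum_congr rfl fun x hx => ?_
  obtain ⟨r, rfl⟩ := (Finset.mem_filter.1 hx).2
  rw [List.drop_left, List.append_assoc, List.drop_left, List.singleton_append, prodAlong,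
    mul_left_comm]

theorem sum_prefix_mul_prodAlong_eq_add {T : Finset (List ℕ)} (hT : T ⊆ G.H) (f : List ℕ → ℝ)
    (h : List ℕ) :
    ∑ x ∈ T with h <+: x, f x * G.prodAlong γ h (x.drop h.length) =
      (if h ∈ T then f h else 0) + ∑ a ∈ G.A h, G.moveProb γ h a *
        ∑ x ∈ T with h ++ [a] <+: x,
          f x * G.prodAlong γ (h ++ [a]) (x.drop (h ++ [a]).length) := by
  rw [sum_filter_prefix_eq_add hT, List.drop_length, prodAlong, mul_one]
  simp only [sum_prefix_mul_prodAlong_snoc]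

theorem uExpFrom_eq_add (h : List ℕ) :
    G.uExpFrom i γ h = (if h ∈ G.Zset then G.u i h else 0) +
      ∑ a ∈ G.A h, G.moveProb γ h a * G.uExpFrom i γ (h ++ [a]) :=
  sum_prefix_mul_prodAlong_eq_add (Finset.filter_subset _ _) (G.u i) h

theorem uExpFrom_of_mem_Info (hj : j < G.m i) {h : List ℕ} (hh : h ∈ G.Info i j) :
    G.uExpFrom i γ h = ∑ a ∈ G.A h, γ i j a * G.uExpFrom i γ (h ++ [a]) := by
  rw [uExpFrom_eq_add, if_neg (notMem_Zset_of_mem_Info hj hh), zero_add]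
  simp only [moveProb_of_mem_Info hj hh]

/-- The gain of a one-shot deviation at `h` from `τ` to `σ`, the continuation being `σ`. -/
def deviationGain (G : EFG) (i : Fin G.n) (σ τ : G.Profile) (h : List ℕ) : ℝ :=
  ∑ a ∈ G.A h, (G.moveProb σ h a - G.moveProb τ h a) * G.uExpFrom i σ (h ++ [a])

theorem uExpFrom_sub_uExpFrom (σ τ : G.Profile) : ∀ h ∈ G.H,
    G.uExpFrom i σ h - G.uExpFrom i τ h =
      ∑ x ∈ G.H with h <+: x, G.deviationGain i σ τ x * G.prodAlong τ h (x.drop h.length) := by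
  refine backward_induction fun h hh ih => ?_
  have hstep : G.uExpFrom i σ h - G.uExpFrom i τ h = G.deviationGain i σ τ h +
      ∑ a ∈ G.A h, G.moveProb τ h a *
        (G.uExpFrom i σ (h ++ [a]) - G.uExpFrom i τ (h ++ [a])) := by
    rw [uExpFrom_eq_add (γ := σ), uExpFrom_eq_add (γ := τ), add_sub_add_left_eq_sub,
      deviationGain, ← Finset.sum_sub_distrib, ← Finset.sum_add_distrib]
    exact Finset.sum_congr rfl fun a _ => by ring
  rw [hstep, sum_prefix_mul_prodAlong_eq_add subset_rfl, if_pos hh]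
  exact congrArg _ (Finset.sum_congr rfl fun a ha => by rw [ih a ha])

theorem deviationGain_replace_eq_zero {b' : ℕ → ℕ → ℝ} {x : List ℕ}
    (hx : ∀ q < G.m i, x ∉ G.Info i q) :
    G.deviationGain i (G.replace β i b) (G.replace β i b') x = 0 := by
  refine Finset.sum_eq_zero fun a ha => ?_
  have hP : G.P x ≠ some i := fun hP =>
    hx _ (infoIdx_lt_of_snoc (mem_A.1 ha) hP) (mem_Info_infoIdx (mem_A.1 ha) hP)
  rw [moveProb_replace_of_ne hP, moveProb_replace_of_ne hP, sub_self, zero_mul]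

theorem sum_Sh_mul_uExpFrom_sub (hj : j < G.m i) {b' : ℕ → ℕ → ℝ} :
    ∑ h ∈ G.Info i j, G.Sh i β h *
        (G.uExpFrom i (G.replace β i b) h - G.uExpFrom i (G.replace β i b') h) =
      ∑ x ∈ G.H, G.reachWeight i j b' x *
        (G.Sh i β x * G.deviationGain i (G.replace β i b) (G.replace β i b') x) := by
  set D := G.deviationGain i (G.replace β i b) (G.replace β i b')
  calc
    _ = ∑ h ∈ G.Info i j, ∑ x ∈ G.H with h <+: x,
          recordProb b' (G.recordFrom i h (x.drop h.length)) * (G.Sh i β x * D x) := by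
      refine Finset.sum_congr rfl fun h hh => ?_
      rw [uExpFrom_sub_uExpFrom _ _ h (mem_H_of_mem_Info hj hh), Finset.mul_sum]
      refine Finset.sum_congr rfl fun x hx => ?_
      obtain ⟨r, rfl⟩ := (Finset.mem_filter.1 hx).2
      rw [List.drop_left, mul_left_comm, Sh_mul_prodAlong_replace]
      ring
    _ = ∑ x ∈ G.H, ∑ h ∈ G.Info i j with h <+: x,
          recordProb b' (G.recordFrom i h (x.drop h.length)) * (G.Sh i β x * D x) :=
      Finset.sum_comm' fun h x => by simp only [Finset.mem_filter]; tauto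
    _ = _ := by simp only [reachWeight, Finset.sum_mul]

/-! ### Conditional payoffs -/

theorem nuAux_append_cons {w : List ℕ → ℝ} {pre l : List ℕ} (hl : pre ++ l ∈ G.Info i j)
    (hfirst : ∀ h ∈ G.Info i j, h <+: pre ++ l → h = pre ++ l) (a : ℕ) (r : List ℕ) :
    G.nuAux i j γ w pre (l ++ a :: r) = w (pre ++ l) * G.prodAlong γ (pre ++ l ++ [a]) r := by
  induction l generalizing pre with
  | nil =>
    rw [List.append_nil] at hl ⊢
    rw [List.nil_append, nuAux, if_pos hl]
  | cons c l ih =>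
    have hpre : pre ∉ G.Info i j := fun hpre => by
      simpa using hfirst pre hpre (List.prefix_append _ _)
    rw [List.append_cons pre] at hl hfirst ⊢
    rw [List.cons_append, nuAux, if_neg hpre, ih hl hfirst]

theorem nu_append_cons (hPR : G.PerfectRecall) (hj : j < G.m i) {h : List ℕ}
    (hh : h ∈ G.Info i j) (a : ℕ) (r : List ℕ) :
    G.nu i j γ μ (h ++ a :: r) = μ i j h * G.prodAlong γ (h ++ [a]) r :=
  nuAux_append_cons (pre := []) hh (fun _ hx => eq_of_prefix_of_mem_Info hPR hj hx hh) a r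

theorem filter_mem_Zset_eq_biUnion (hj : j < G.m i) {a : ℕ} (ha : a ∈ G.infoA i j) :
    {z ∈ G.Zset | a ∈ z} = (G.Info i j).biUnion fun h => {z ∈ G.Zset | h ++ [a] <+: z} := by
  ext z
  simp only [Finset.mem_filter, Finset.mem_biUnion]
  constructor
  · rintro ⟨hz, haz⟩
    obtain ⟨h, r, rfl⟩ := List.append_of_mem haz
    have hp : h ++ [a] <+: h ++ a :: r := ⟨r, by simp⟩
    have hha : h ++ [a] ∈ G.H := G.prefixClosed _ (Finset.mem_filter.1 hz).1 _ hp
    exact ⟨h, mem_Info_of_mem_infoA hj ha hha, hz, hp⟩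
  · rintro ⟨h, -, hz, hp⟩
    exact ⟨hz, hp.subset (by simp)⟩

theorem uCond_rho (hPR : G.PerfectRecall) (hj : j < G.m i) {a : ℕ} (ha : a ∈ G.infoA i j) :
    G.uCond i j a (G.rho i j β βt) μ =
      ∑ h ∈ G.Info i j, μ i j h * G.uExpFrom i (G.replace β i (βt i)) (h ++ [a]) := by
  rw [uCond, filter_mem_Zset_eq_biUnion hj ha, Finset.sum_biUnion]
  · refine Finset.sum_congr rfl fun h hh => ?_
    rw [uExpFrom, Finset.mul_sum]
    refine Finset.sum_congr rfl fun z hz => ?_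
    obtain ⟨hzZ, r, rfl⟩ := Finset.mem_filter.1 hz
    rw [List.drop_left, ← prodAlong_rho_of_mem ha (by simp) (Finset.mem_filter.1 hzZ).1,
      List.append_assoc, List.singleton_append, nu_append_cons hPR hj hh]
    ring
  · intro h hh h' hh' hne
    refine Finset.disjoint_left.2 fun z hz hz' => hne ?_
    exact eq_of_prefix_of_prefix hPR hj hh hh'
      ((List.prefix_append _ _).trans (Finset.mem_filter.1 hz).2)
      ((List.prefix_append _ _).trans (Finset.mem_filter.1 hz').2)

theorem SInfo_mul_sum_uCond_rho (hPR : G.PerfectRecall) (hμ : G.SelfIndep β μ) (hj : j < G.m i)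
    (w : ℕ → ℝ) :
    G.SInfo i j β * ∑ a ∈ G.infoA i j, w a * G.uCond i j a (G.rho i j β βt) μ =
      ∑ h ∈ G.Info i j, G.Sh i β h *
        ∑ a ∈ G.A h, w a * G.uExpFrom i (G.replace β i (βt i)) (h ++ [a]) := by
  set V := G.uExpFrom i (G.replace β i (βt i))
  calc
    _ = ∑ a ∈ G.infoA i j, ∑ h ∈ G.Info i j, G.Sh i β h * (w a * V (h ++ [a])) := by
      rw [Finset.mul_sum]
      refine Finset.sum_congr rfl fun a ha => ?_
      rw [uCond_rho hPR hj ha, Finset.mul_sum, Finset.mul_sum]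
      refine Finset.sum_congr rfl fun h hh => ?_
      rw [← hμ i j hj h hh]
      ring
    _ = _ := by
      rw [Finset.sum_comm]
      refine Finset.sum_congr rfl fun h hh => ?_
      rw [infoA_eq_A hj hh, Finset.mul_sum]

theorem SInfo_mul_payoff_eq_sum_uExpFrom (hPR : G.PerfectRecall) (hμ : G.SelfIndep β μ)
    (hj : j < G.m i) :
    G.SInfo i j β * ∑ a ∈ G.infoA i j, βt i j a * G.uCond i j a (G.rho i j β βt) μ =
      ∑ h ∈ G.Info i j, G.Sh i β h * G.uExpFrom i (G.replace β i (βt i)) h := by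
  rw [SInfo_mul_sum_uCond_rho hPR hμ hj]
  refine Finset.sum_congr rfl fun h hh => ?_
  rw [uExpFrom_of_mem_Info hj hh, replace, if_pos rfl]

theorem sum_Sh_mul_deviationGain (hPR : G.PerfectRecall) (hμ : G.SelfIndep β μ)
    (hq : q < G.m i) (b' : ℕ → ℕ → ℝ) :
    ∑ x ∈ G.Info i q, G.Sh i β x *
        G.deviationGain i (G.replace β i (βt i)) (G.replace β i b') x =
      G.SInfo i q β *
        ∑ a ∈ G.infoA i q, (βt i q a - b' q a) * G.uCond i q a (G.rho i q β βt) μ := by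
  rw [SInfo_mul_sum_uCond_rho hPR hμ hq]
  refine Finset.sum_congr rfl fun x hx => ?_
  simp only [deviationGain, moveProb_of_mem_Info hq hx, replace, if_pos]

/-- Condition (ii) of the Nash characterization: at each of his information sets every player's
part of `βt` puts weight only on actions maximizing the conditional payoff, given that he
continues with `βt`. -/
def IsCondOptimal (G : EFG) (β βt : G.Profile) (μ : G.Belief) : Prop :=
  ∀ (i : Fin G.n) (j : ℕ), j < G.m i → ∀ a' ∈ G.infoA i j, ∀ a'' ∈ G.infoA i j,
    G.uCond i j a' (G.rho i j β βt) μ < G.uCond i j a'' (G.rho i j β βt) μ → βt i j a' = 0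

theorem IsCondOptimal.sum_Sh_mul_deviationGain_nonneg (hopt : G.IsCondOptimal β βt μ)
    (hPR : G.PerfectRecall) (hβ : G.IsBehProfile β) (hβt : G.IsBehStrategy i (βt i))
    (hb : G.IsBehStrategy i b) (hμ : G.SelfIndep β μ) (hq : q < G.m i) :
    0 ≤ ∑ x ∈ G.Info i q, G.Sh i β x *
        G.deviationGain i (G.replace β i (βt i)) (G.replace β i b) x := by
  rw [sum_Sh_mul_deviationGain hPR hμ hq]
  refine mul_nonneg (SInfo_nonneg hβ hq) ?_
  simp only [sub_mul, Finset.sum_sub_distrib, sub_nonneg]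
  exact sum_mul_le_sum_mul_of_support_argmax (hβt q hq).2 (hb q hq).2 (hb q hq).1 (hopt i q hq)

theorem IsCondOptimal.sum_Sh_mul_uExpFrom_le (hopt : G.IsCondOptimal β βt μ)
    (hPR : G.PerfectRecall) (hβ : G.IsBehProfile β) (hβt : G.IsBehStrategy i (βt i))
    (hb : G.IsBehStrategy i b) (hμ : G.SelfIndep β μ) (hj : j < G.m i) :
    ∑ h ∈ G.Info i j, G.Sh i β h * G.uExpFrom i (G.replace β i b) h ≤
      ∑ h ∈ G.Info i j, G.Sh i β h * G.uExpFrom i (G.replace β i (βt i)) h := by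
  rw [← sub_nonneg, ← Finset.sum_sub_distrib]
  simp only [← mul_sub]
  rw [sum_Sh_mul_uExpFrom_sub hj, sum_H_eq_sum_Info (i := i) fun x _ hx => by
    rw [deviationGain_replace_eq_zero hx, mul_zero, mul_zero]]
  refine Finset.sum_nonneg fun q hq => ?_
  rw [Finset.mem_range] at hq
  obtain ⟨x₀, hx₀⟩ := G.info_nonempty i q hq
  rw [Finset.sum_congr rfl fun x hx => by rw [reachWeight_eq_of_mem_Info hPR hj hq hx hx₀],
    ← Finset.mul_sum]
  exact mul_nonneg (reachWeight_nonneg hb (mem_H_of_mem_Info hq hx₀))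
    (hopt.sum_Sh_mul_deviationGain_nonneg hPR hβ hβt hb hμ hq)

end EFG

theorem stmt18_general (G : EFG) (hPR : G.PerfectRecall)
    (β βt : G.Profile) (μ : G.Belief)
    (hβ : G.IsBehProfile β) (hβt : G.IsBehProfile βt)
    (hopt : G.IsCondOptimal β βt μ) (hμ : G.SelfIndep β μ) :
    ∀ (i : Fin G.n) (j : ℕ), j < G.m i → 0 < G.SInfo i j β →
      IsGreatest
        {x : ℝ | ∃ βt' : G.Profile, G.IsBehProfile βt' ∧
          x = ∑ a ∈ G.infoA i j, βt' i j a * G.uCond i j a (G.rho i j β βt') μ}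
        (∑ a ∈ G.infoA i j, βt i j a * G.uCond i j a (G.rho i j β βt) μ) := by
  intro i j hj hS
  refine ⟨⟨βt, hβt, rfl⟩, ?_⟩
  rintro _ ⟨βt', hβt', rfl⟩
  refine le_of_mul_le_mul_left ?_ hS
  rw [EFG.SInfo_mul_payoff_eq_sum_uExpFrom hPR hμ hj,
    EFG.SInfo_mul_payoff_eq_sum_uExpFrom hPR hμ hj]
  exact hopt.sum_Sh_mul_uExpFrom_le hPR hβ (hβt i) (hβt' i) hμ hj

/-- Equation (edneF): under the Nash characterization, at every information set with
`S^i(I_i^j|β*) > 0` the extra profile `β̃*` attains the maximum over all behavioral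
strategy profiles `β̃` of `Σ_a β̃^i_{I_i^j}(a) · u^i(a, ϱ^i_{I_i^j}(β*^{-I_i^j}, β̃), μ* | I_i^j)`. -/
theorem stmt18 (G : EFG) (hPR : G.PerfectRecall)
    (β βt : G.Profile) (μ : G.Belief)
    (hβ : G.IsBehProfile β) (hβt : G.IsBehProfile βt)
    (hchar : G.NashChar β βt μ) :
    ∀ (i : Fin G.n) (j : ℕ), j < G.m i → 0 < G.SInfo i j β →
      IsGreatest
        {x : ℝ | ∃ βt' : G.Profile, G.IsBehProfile βt' ∧
          x = ∑ a ∈ G.infoA i j, βt' i j a * G.uCond i j a (G.rho i j β βt') μ}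
        (∑ a ∈ G.infoA i j, βt i j a * G.uCond i j a (G.rho i j β βt) μ) :=
  stmt18_general G hPR β βt μ hβ hβt hchar.2.1 hchar.2.2.2
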